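/- Regularity of a matrix pencil is equivalent to operator scalability (Corollary 4.23): let A₁, A₂ be n×m complex matrices with ker A₁ ∩ ker A₂ = {0} and ker A₁† ∩ ker A₂† = {0}. Then the matrix pencil sA₁ + A₂ is regular — i.e., n = m and det(sA₁ + A₂) ≠ 0 for some s ∈ ℂ — if and only if n = m and the pair (A₁,A₂) is (1/n, 1/n)-scalable, meaning: for every ε > 0 there exist g, h ∈ GL_n(ℂ) such that ‖Σ_{ℓ=1}^2 g A_ℓ h† h A_ℓ† g† − (1/n)·Iₙ‖² + ‖Σ_{ℓ=1}^2 h A_ℓ† g† g A_ℓ h† − (1/n)·Iₙ‖² ≤ ε². -/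

import Mathlib

open Matrix

/-- The Frobenius norm of a complex matrix. -/
noncomputable def frobNorm {a b : ℕ} (M : Matrix (Fin a) (Fin b) ℂ) : ℝ :=
  Real.sqrt (∑ i, ∑ j, ‖M i j‖ ^ 2)

lemma frobNorm_sq {a b : ℕ} (M : Matrix (Fin a) (Fin b) ℂ) :
    frobNorm M ^ 2 = ∑ i, ∑ j, ‖M i j‖ ^ 2 := by
  unfold frobNorm
  rw [Real.sq_sqrt]
  positivity

/-- The scaling defect of a pair of square matrices. -/
noncomputable def defect {n : ℕ} (B₁ B₂ : Matrix (Fin n) (Fin n) ℂ) : ℝ :=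
  frobNorm (B₁ * B₁ᴴ + B₂ * B₂ᴴ - ((n : ℂ))⁻¹ • 1) ^ 2
    + frobNorm (B₁ᴴ * B₁ + B₂ᴴ * B₂ - ((n : ℂ))⁻¹ • 1) ^ 2

lemma defect_continuous {n : ℕ} (F G : ℝ → Matrix (Fin n) (Fin n) ℂ)
    (hF : Continuous F) (hG : Continuous G) : Continuous (fun x => defect (F x) (G x)) := by
  unfold defect
  simp only [frobNorm_sq]
  have h1 : Continuous fun x => F x * (F x)ᴴ + G x * (G x)ᴴ - ((n : ℂ))⁻¹ • 1 := by fun_prop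
  have h2 : Continuous fun x => (F x)ᴴ * F x + (G x)ᴴ * G x - ((n : ℂ))⁻¹ • 1 := by fun_prop
  refine Continuous.add ?_ ?_
  · refine continuous_finsetSum _ fun i _ => continuous_finsetSum _ fun j _ => ?_
    exact ((h1.matrix_elem i j).norm).pow 2
  · refine continuous_finsetSum _ fun i _ => continuous_finsetSum _ fun j _ => ?_
    exact ((h2.matrix_elem i j).norm).pow 2

/-- Lower-triangular matrix with off-diagonal entries damped by `δ`. -/
noncomputable def damp {n : ℕ} (r : Fin n → ℂ) (T : Matrix (Fin n) (Fin n) ℂ) (δ : ℝ) :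
    Matrix (Fin n) (Fin n) ℂ :=
  Matrix.of fun i j => r i * ((δ : ℂ) ^ ((i : ℕ) - (j : ℕ)) * T i j)

lemma damp_continuous {n : ℕ} (r : Fin n → ℂ) (T : Matrix (Fin n) (Fin n) ℂ) :
    Continuous (damp r T) := by
  refine continuous_matrix fun i j => ?_
  simp only [damp, Matrix.of_apply]
  fun_prop

lemma damp_zero {n : ℕ} (r : Fin n → ℂ) (T : Matrix (Fin n) (Fin n) ℂ)
    (hT : ∀ i j, i < j → T i j = 0) :
    damp r T 0 = diagonal fun i => r i * T i i := by
  ext i j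
  simp only [damp, Matrix.of_apply, diagonal_apply]
  split_ifs with h
  · subst h; simp
  · rcases lt_or_gt_of_ne h with h | h
    · simp [hT i j h]
    · have : (i : ℕ) - (j : ℕ) ≠ 0 := by have := Fin.lt_def.1 h; omega
      simp [this]

lemma damp_eq {n : ℕ} (r : Fin n → ℂ) (T : Matrix (Fin n) (Fin n) ℂ)
    (hT : ∀ i j, i < j → T i j = 0) (δ : ℝ) (hδ : δ ≠ 0) :
    damp r T δ = diagonal (fun i : Fin n => r i * (δ : ℂ) ^ (i : ℕ)) * T *
      diagonal (fun i : Fin n => ((δ : ℂ) ^ (i : ℕ))⁻¹) := by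
  have hδ' : (δ : ℂ) ≠ 0 := by exact_mod_cast hδ
  ext i j
  simp only [damp, Matrix.of_apply, diagonal_mul, mul_diagonal]
  rcases lt_or_ge i j with h | h
  · simp [hT i j h]
  · rw [pow_sub₀ _ hδ' (Fin.le_def.1 h)]; ring

lemma core_fwd {n : ℕ} (hn : 1 ≤ n) (T U : Matrix (Fin n) (Fin n) ℂ)
    (hT : ∀ i j, i < j → T i j = 0) (hU : ∀ i j, i < j → U i j = 0)
    (hne : ∀ i, T i i ≠ 0 ∨ U i i ≠ 0) (ε : ℝ) (hε : 0 < ε) :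
    ∃ d e : Fin n → ℂ, (∀ i, d i ≠ 0) ∧ (∀ i, e i ≠ 0) ∧
      defect (diagonal d * T * diagonal e) (diagonal d * U * diagonal e) ≤ ε ^ 2 := by
  have hn0 : (0 : ℝ) < n := by exact_mod_cast hn
  have hq : ∀ i, 0 < ‖T i i‖ ^ 2 + ‖U i i‖ ^ 2 := by
    intro i
    rcases hne i with h | h
    · have := norm_pos_iff.2 h; positivity
    · have := norm_pos_iff.2 h; positivity
  set ρ : Fin n → ℝ := fun i => (Real.sqrt (n * (‖T i i‖ ^ 2 + ‖U i i‖ ^ 2)))⁻¹ with hρ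
  have hρpos : ∀ i, 0 < ρ i := fun i => inv_pos.2 (Real.sqrt_pos.2 (mul_pos hn0 (hq i)))
  have hρsq : ∀ i, ρ i ^ 2 * (‖T i i‖ ^ 2 + ‖U i i‖ ^ 2) = (n : ℝ)⁻¹ := by
    intro i
    simp only [hρ]
    rw [inv_pow, Real.sq_sqrt (mul_pos hn0 (hq i)).le]
    have := (hq i).ne'
    field_simp
  have hc : ∀ i, (ρ i : ℂ) * T i i * star ((ρ i : ℂ) * T i i)
      + (ρ i : ℂ) * U i i * star ((ρ i : ℂ) * U i i) = (n : ℂ)⁻¹ := by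
    intro i
    have h := congrArg (fun x : ℝ => (x : ℂ)) (hρsq i)
    push_cast at h
    rw [← h, ← Complex.mul_conj', ← Complex.mul_conj']
    simp
    ring
  set r : Fin n → ℂ := fun i => (ρ i : ℂ) with hr
  have h0 : defect (damp r T 0) (damp r U 0) = 0 := by
    rw [damp_zero r T hT, damp_zero r U hU]
    have e1 : (n : ℂ)⁻¹ • (1 : Matrix (Fin n) (Fin n) ℂ) = diagonal fun _ => (n : ℂ)⁻¹ := by
      rw [smul_one_eq_diagonal]
    have hc' : ∀ i, star ((ρ i : ℂ) * T i i) * ((ρ i : ℂ) * T i i)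
      + star ((ρ i : ℂ) * U i i) * ((ρ i : ℂ) * U i i) = (n : ℂ)⁻¹ := by
      intro i; rw [← hc i]; ring
    unfold defect
    simp only [diagonal_conjTranspose, diagonal_mul_diagonal, diagonal_add, e1, Pi.star_apply, hr,
      hc, hc', sub_self]
    simp [frobNorm]
  have hcont := defect_continuous _ _ (damp_continuous r T) (damp_continuous r U)
  have hev : ∀ᶠ x in nhds (0 : ℝ), defect (damp r T x) (damp r U x) < ε ^ 2 :=
    hcont.continuousAt.eventually_lt continuousAt_const (by rw [h0]; positivity)
  obtain ⟨η, hη, hball⟩ := Metric.eventually_nhds_iff.1 hev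
  have hδ : (η / 2) ≠ 0 := by positivity
  have hδ' : ((η / 2 : ℝ) : ℂ) ≠ 0 := by exact_mod_cast hδ
  have := hball (y := η / 2) (by rw [Real.dist_eq, sub_zero, abs_of_pos (by positivity)]; linarith)
  rw [damp_eq r T hT _ hδ, damp_eq r U hU _ hδ] at this
  refine ⟨_, _, ?_, ?_, this.le⟩
  · intro i
    exact mul_ne_zero (by simpa [hr] using (hρpos i).ne') (pow_ne_zero _ hδ')
  · intro i
    exact inv_ne_zero (pow_ne_zero _ hδ')

lemma exists_triangular (n : ℕ) : ∀ (V : Type) [AddCommGroup V] [Module ℂ V]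
    [FiniteDimensional ℂ V] (_ : Module.finrank ℂ V = n) (f : V →ₗ[ℂ] V),
    ∃ b : Module.Basis (Fin n) ℂ V, ∀ j, ∃ c : Fin n → ℂ, (∀ i, i < j → c i = 0) ∧
      f (b j) = ∑ i, c i • b i := by
  induction n with
  | zero =>
    intro V _ _ _ hV f
    exact ⟨Module.finBasisOfFinrankEq ℂ V hV, fun j => j.elim0⟩
  | succ n ih =>
    intro V _ _ _ hV f
    have : Nontrivial V := Module.nontrivial_of_finrank_pos (R := ℂ) (by omega)
    obtain ⟨μ, hμ⟩ := Module.End.exists_eigenvalue (f : Module.End ℂ V)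
    -- a nonzero functional killing the range of `f - μ`
    have hlt : LinearMap.range (f - μ • (1 : Module.End ℂ V)) < ⊤ := by
      rw [lt_top_iff_ne_top]
      intro htop
      obtain ⟨v, hv⟩ := hμ.exists_hasEigenvector
      have hinj := LinearMap.injective_iff_surjective.2 (LinearMap.range_eq_top.1 htop)
      apply hv.2
      apply hinj
      simp [hv.apply_eq_smul]
    obtain ⟨φ, hφ, hle⟩ := Submodule.exists_le_ker_of_lt_top _ hlt
    set W := LinearMap.ker φ with hW
    have hφf : ∀ x, φ (f x) = μ * φ x := by
      intro x
      have : (f - μ • (1 : Module.End ℂ V)) x ∈ W := hle ⟨x, rfl⟩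
      have := LinearMap.mem_ker.1 this
      simpa [sub_eq_zero] using this
    have hinv : ∀ x ∈ W, f x ∈ W := by
      intro x hx
      have hx' : φ x = 0 := hx
      show φ (f x) = 0
      rw [hφf, hx', mul_zero]
    have hdim : Module.finrank ℂ W = n := by
      have h1 := LinearMap.finrank_range_add_finrank_ker φ
      have h2 : LinearMap.range φ = ⊤ := LinearMap.range_eq_top.2 (LinearMap.surjective hφ)
      rw [h2, finrank_top, Module.finrank_self, ← hW] at h1
      omega
    obtain ⟨b, hb⟩ := ih W hdim (f.restrict hinv)
    obtain ⟨y, hy⟩ : ∃ y, φ y ≠ 0 := by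
      by_contra! h
      exact hφ (LinearMap.ext h)
    let b' := Module.Basis.mkFinCons y b
      (by
        intro c x hx h
        have hx' : φ x = 0 := hx
        have := congrArg φ h
        simpa [hx', hy] using this)
      (by
        intro z
        refine ⟨-(φ z / φ y), ?_⟩
        show φ _ = 0
        simp
        field_simp
        simp)
    refine ⟨b', fun j => ?_⟩
    refine Fin.cases ?_ (fun j => ?_) j
    · refine ⟨b'.repr (f (b' 0)), fun i hi => absurd hi (Fin.not_lt_zero i), ?_⟩
      exact (b'.sum_repr _).symm
    · obtain ⟨c, hc, hfc⟩ := hb j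
      refine ⟨Fin.cons 0 c, ?_, ?_⟩
      · intro i
        refine Fin.cases ?_ (fun i => ?_) i
        · simp
        · intro h; simpa using hc i (Fin.succ_lt_succ_iff.1 h)
      · have := congrArg (Subtype.val) hfc
        rw [Fin.sum_univ_succ]
        simpa [b', Module.Basis.coe_mkFinCons] using this

lemma defect_scaled {n : ℕ} (A₁ A₂ g h : Matrix (Fin n) (Fin n) ℂ) :
    frobNorm ((g * A₁ * hᴴ * h * A₁ᴴ * gᴴ + g * A₂ * hᴴ * h * A₂ᴴ * gᴴ) - ((n : ℂ))⁻¹ • 1) ^ 2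
    + frobNorm ((h * A₁ᴴ * gᴴ * g * A₁ * hᴴ + h * A₂ᴴ * gᴴ * g * A₂ * hᴴ)
        - ((n : ℂ))⁻¹ • 1) ^ 2 = defect (g * A₁ * hᴴ) (g * A₂ * hᴴ) := by
  unfold defect
  simp only [conjTranspose_mul, conjTranspose_conjTranspose, Matrix.mul_assoc]

lemma fwd {n : ℕ} (hn : 1 ≤ n) (A₁ A₂ : Matrix (Fin n) (Fin n) ℂ) (s : ℂ)
    (hs : (s • A₁ + A₂).det ≠ 0) (ε : ℝ) (hε : 0 < ε) :
    ∃ g h : GL (Fin n) ℂ, defect ((g : Matrix (Fin n) (Fin n) ℂ) * A₁ * (h.1)ᴴ)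
      ((g : Matrix (Fin n) (Fin n) ℂ) * A₂ * (h.1)ᴴ) ≤ ε ^ 2 := by
  set S := s • A₁ + A₂ with hS
  have hSu : IsUnit S.det := isUnit_iff_ne_zero.2 hs
  obtain ⟨b, hb⟩ := exists_triangular n (Fin n → ℂ) (by simp) (S⁻¹ * A₁).mulVecLin
  choose c hc hfc using hb
  set P : Matrix (Fin n) (Fin n) ℂ := Matrix.of fun i j => b j i with hP
  set T : Matrix (Fin n) (Fin n) ℂ := Matrix.of fun i j => c j i with hTdef
  have hPu : IsUnit P.det := by
    have h1 : P = (Pi.basisFun ℂ (Fin n)).toMatrix b := by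
      ext i j; simp [hP, Module.Basis.toMatrix_apply]
    rw [h1, ← Module.Basis.det_apply]
    exact Module.Basis.isUnit_det _ b
  have hAP : S⁻¹ * A₁ * P = P * T := by
    ext i j
    have := congrFun (hfc j) i
    simp only [Matrix.mulVecLin_apply, Finset.sum_apply, Pi.smul_apply, smul_eq_mul] at this
    rw [Matrix.mul_apply, Matrix.mul_apply]
    simp only [mulVec, dotProduct] at this
    simp only [hP, hTdef, Matrix.of_apply]
    rw [this]
    exact Finset.sum_congr rfl fun _ _ => mul_comm _ _
  have hT : P⁻¹ * S⁻¹ * A₁ * P = T := by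
    rw [Matrix.mul_assoc P⁻¹, Matrix.mul_assoc P⁻¹, hAP, ← Matrix.mul_assoc,
      Matrix.nonsing_inv_mul _ hPu, Matrix.one_mul]
  have hU : P⁻¹ * S⁻¹ * A₂ * P = 1 - s • T := by
    have : A₂ = S - s • A₁ := by rw [hS]; abel
    rw [this, Matrix.mul_sub, Matrix.sub_mul, Matrix.mul_assoc P⁻¹ S⁻¹ S,
      Matrix.nonsing_inv_mul _ hSu, Matrix.mul_one, Matrix.nonsing_inv_mul _ hPu,
      Matrix.mul_smul, Matrix.smul_mul, hT]
  have hTl : ∀ i j, i < j → T i j = 0 := fun i j hij => hc j i hij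
  obtain ⟨d, e, hd, he, hdef⟩ := core_fwd hn T (1 - s • T) hTl
    (by
      intro i j hij
      simp [hTl i j hij, hij.ne])
    (by
      intro i
      by_contra! h
      obtain ⟨h1, h2⟩ := h
      simp [h1] at h2) ε hε
  have hgu : IsUnit (diagonal d * (P⁻¹ * S⁻¹)).det := by
    rw [det_mul, det_mul, det_diagonal]
    refine (isUnit_iff_ne_zero.2 (Finset.prod_ne_zero_iff.2 fun i _ => hd i)).mul
      (IsUnit.mul ?_ ?_)
    · exact Matrix.isUnit_nonsing_inv_det _ hPu
    · exact Matrix.isUnit_nonsing_inv_det _ hSu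
  have hhu : IsUnit ((P * diagonal e)ᴴ).det := by
    rw [det_conjTranspose, det_mul, det_diagonal]
    exact (hPu.mul (isUnit_iff_ne_zero.2 (Finset.prod_ne_zero_iff.2 fun i _ => he i))).star
  refine ⟨Matrix.nonsingInvUnit _ hgu, Matrix.nonsingInvUnit _ hhu, ?_⟩
  have key : ∀ A : Matrix (Fin n) (Fin n) ℂ, diagonal d * (P⁻¹ * S⁻¹) * A * ((P * diagonal e)ᴴ)ᴴ
      = diagonal d * (P⁻¹ * S⁻¹ * A * P) * diagonal e := by
    intro A
    rw [conjTranspose_conjTranspose]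
    simp only [Matrix.mul_assoc]
  change defect (diagonal d * (P⁻¹ * S⁻¹) * A₁ * ((P * diagonal e)ᴴ)ᴴ)
    (diagonal d * (P⁻¹ * S⁻¹) * A₂ * ((P * diagonal e)ᴴ)ᴴ) ≤ _
  rw [key, key, hT, hU]
  exact hdef

lemma shrunk {n : ℕ} (A₁ A₂ : Matrix (Fin n) (Fin n) ℂ)
    (hdet : ∀ s : ℂ, (s • A₁ + A₂).det = 0) :
    ∃ (k : ℕ) (v : Fin k → Fin n → ℂ) (W : Submodule ℂ (Fin n → ℂ)),
      LinearIndependent ℂ v ∧ Module.finrank ℂ W < k ∧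
      ∀ i, A₁ *ᵥ v i ∈ W ∧ A₂ *ᵥ v i ∈ W := by
  have h1 : ∀ k : ℕ, ∃ v : Fin n → ℂ, v ≠ 0 ∧ ((k : ℂ) • A₁ + A₂) *ᵥ v = 0 := fun k =>
    Matrix.exists_mulVec_eq_zero_iff.2 (hdet k)
  choose w hw0 hw using h1
  have hw' : ∀ k, A₂ *ᵥ w k = -((k : ℂ) • A₁ *ᵥ w k) := by
    intro k
    have := hw k
    rw [Matrix.add_mulVec, Matrix.smul_mulVec] at this
    exact eq_neg_of_add_eq_zero_right this
  have hex : ∃ K : ℕ, ¬ LinearIndependent ℂ (fun i : Fin K => w i) := by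
    refine ⟨n + 1, fun h => ?_⟩
    have := h.fintype_card_le_finrank
    simp at this
  classical
  obtain ⟨K, hK, hmin⟩ : ∃ K, ¬ LinearIndependent ℂ (fun i : Fin K => w i) ∧
      ∀ j < K, LinearIndependent ℂ (fun i : Fin j => w i) :=
    ⟨Nat.find hex, Nat.find_spec hex, fun j hj => not_not.1 (Nat.find_min hex hj)⟩
  obtain _ | k := K
  · exact absurd linearIndependent_empty_type hK
  have hli := hmin k (Nat.lt_succ_self k)
  have hmem : w k ∈ Submodule.span ℂ (Set.range fun i : Fin k => w i) := by
    by_contra hnot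
    apply hK
    rw [linearIndependent_finSucc']
    refine ⟨hli, ?_⟩
    exact hnot
  obtain ⟨c, hc⟩ := (Submodule.mem_span_range_iff_exists_fun ℂ).1 hmem
  refine ⟨k, fun i => w i, Submodule.span ℂ (Set.range fun i : Fin k => A₁ *ᵥ w i), hli, ?_, ?_⟩
  · by_contra hge
    push Not at hge
    have hli2 : LinearIndependent ℂ (fun i : Fin k => A₁ *ᵥ w i) := by
      rw [linearIndependent_iff_card_le_finrank_span]
      simpa [Set.finrank] using hge
    have e1 : A₁ *ᵥ w k = ∑ i : Fin k, c i • A₁ *ᵥ w i := by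
      rw [← hc, Matrix.mulVec_sum]
      simp only [Matrix.mulVec_smul]
    have e2 : A₂ *ᵥ w k = ∑ i : Fin k, c i • A₂ *ᵥ w i := by
      rw [← hc, Matrix.mulVec_sum]
      simp only [Matrix.mulVec_smul]
    have e3 : ∑ i : Fin k, (c i * ((i : ℕ) - (k : ℂ))) • A₁ *ᵥ w i = 0 := by
      rw [hw' k, e1] at e2
      simp only [hw'] at e2
      have : ∀ i : Fin k, (c i * ((i : ℕ) - (k : ℂ))) • A₁ *ᵥ w i
          = (k : ℂ) • -(c i • A₁ *ᵥ w i) - c i • -(((i : ℕ) : ℂ) • A₁ *ᵥ w i) := by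
        intro i; module
      simp only [this, Finset.sum_sub_distrib, ← Finset.smul_sum, Finset.sum_neg_distrib]
      rw [← e2]
      module
    have e4 := Fintype.linearIndependent_iff.1 hli2 _ e3
    have e5 : ∀ i, c i = 0 := by
      intro i
      have := e4 i
      rcases mul_eq_zero.1 this with h | h
      · exact h
      · exfalso
        have h' : ((i : ℕ) : ℂ) = (k : ℂ) := sub_eq_zero.1 h
        have := Nat.cast_injective h'
        have := i.2
        omega
    apply hw0 k
    rw [← hc]
    simp [e5]
  · intro i
    have : A₁ *ᵥ w i ∈ Submodule.span ℂ (Set.range fun i : Fin k => A₁ *ᵥ w i) :=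
      Submodule.subset_span ⟨i, rfl⟩
    refine ⟨this, ?_⟩
    rw [hw']
    exact Submodule.neg_mem _ (Submodule.smul_mem _ _ this)

lemma entry_le {n : ℕ} (M : Matrix (Fin n) (Fin n) ℂ) (ε : ℝ) (hε : 0 < ε)
    (h : frobNorm M ^ 2 ≤ ε ^ 2) (i j) : ‖M i j‖ ≤ ε := by
  rw [frobNorm_sq] at h
  have h1 : ‖M i j‖ ^ 2 ≤ ∑ j, ‖M i j‖ ^ 2 :=
    Finset.single_le_sum (f := fun j => ‖M i j‖ ^ 2) (fun _ _ => by positivity) (Finset.mem_univ j)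
  have h2 : ∑ j, ‖M i j‖ ^ 2 ≤ ∑ i, ∑ j, ‖M i j‖ ^ 2 :=
    Finset.single_le_sum (f := fun i => ∑ j, ‖M i j‖ ^ 2) (fun _ _ => by positivity)
      (Finset.mem_univ i)
  exact (sq_le_sq₀ (norm_nonneg _) hε.le).1 (by linarith)

lemma norm_sq_eq {n : ℕ} (B : Matrix (Fin n) (Fin n) ℂ) (e : EuclideanSpace ℂ (Fin n)) :
    ((‖Matrix.toEuclideanLin B e‖ ^ 2 : ℝ) : ℂ)
      = inner ℂ e (Matrix.toEuclideanLin (Bᴴ * B) e) := by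
  have h1 : Matrix.toEuclideanLin (Bᴴ * B) e
      = LinearMap.adjoint (Matrix.toEuclideanLin B) (Matrix.toEuclideanLin B e) := by
    rw [← Matrix.toEuclideanLin_conjTranspose_eq_adjoint]
    simp [Matrix.toLpLin_apply, Matrix.mulVec_mulVec]
  rw [h1, LinearMap.adjoint_inner_right, inner_self_eq_norm_sq_to_K]
  simp

lemma near {n : ℕ} (B₁ B₂ : Matrix (Fin n) (Fin n) ℂ) (ε : ℝ) (hε : 0 < ε)
    (h : frobNorm (B₁ᴴ * B₁ + B₂ᴴ * B₂ - ((n : ℂ))⁻¹ • 1) ^ 2 ≤ ε ^ 2)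
    (e : EuclideanSpace ℂ (Fin n)) (he : ‖e‖ = 1) :
    |‖Matrix.toEuclideanLin B₁ e‖ ^ 2 + ‖Matrix.toEuclideanLin B₂ e‖ ^ 2 - (n : ℝ)⁻¹|
      ≤ n ^ 2 * ε := by
  set M := B₁ᴴ * B₁ + B₂ᴴ * B₂ - ((n : ℂ))⁻¹ • 1 with hM
  have h1 : ((‖Matrix.toEuclideanLin B₁ e‖ ^ 2 + ‖Matrix.toEuclideanLin B₂ e‖ ^ 2 - (n : ℝ)⁻¹ : ℝ)
      : ℂ) = inner ℂ e (Matrix.toEuclideanLin M e) := by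
    rw [hM, map_sub, map_add, map_smul]
    rw [LinearMap.sub_apply, LinearMap.add_apply, LinearMap.smul_apply, inner_sub_right,
      inner_add_right, inner_smul_right, ← norm_sq_eq, ← norm_sq_eq]
    have : Matrix.toEuclideanLin (1 : Matrix (Fin n) (Fin n) ℂ) e = e := by
      simp [Matrix.toLpLin_apply]
    rw [this, inner_self_eq_norm_sq_to_K, he]
    push_cast
    simp
  rw [← Real.norm_eq_abs, ← Complex.norm_real, h1, PiLp.inner_apply]
  have hcoord : ∀ i, ‖e i‖ ≤ 1 := fun i => by rw [← he]; exact PiLp.norm_apply_le e i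
  have hrow : ∀ i, ‖(Matrix.toEuclideanLin M e) i‖ ≤ n * ε := by
    intro i
    have : (Matrix.toEuclideanLin M e) i = ∑ j, M i j * e j := by
      simp [Matrix.toLpLin_apply, mulVec, dotProduct]
    rw [this]
    refine (norm_sum_le _ _).trans ?_
    have : ∀ j ∈ Finset.univ, ‖M i j * e j‖ ≤ ε := by
      intro j _
      rw [norm_mul]
      have := entry_le M ε hε h i j
      calc _ ≤ ε * 1 := mul_le_mul this (hcoord j) (norm_nonneg _) hε.le
        _ = ε := mul_one _
    simpa using Finset.sum_le_card_nsmul _ _ _ this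
  refine (norm_sum_le _ _).trans ?_
  have : ∀ i ∈ Finset.univ, ‖inner ℂ (e i) ((Matrix.toEuclideanLin M e) i)‖ ≤ n * ε := by
    intro i _
    refine (norm_inner_le_norm _ _).trans ?_
    calc _ ≤ 1 * (n * ε) := mul_le_mul (hcoord i) (hrow i) (norm_nonneg _) zero_le_one
      _ = _ := one_mul _
  have := Finset.sum_le_card_nsmul _ _ _ this
  simp only [Finset.card_univ, Fintype.card_fin, nsmul_eq_mul] at this
  refine this.trans (le_of_eq ?_)
  ring

/-- Bessel double counting. -/
lemma bessel {n : ℕ} (B : Matrix (Fin n) (Fin n) ℂ)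
    (V W : Submodule ℂ (EuclideanSpace ℂ (Fin n)))
    (hVW : ∀ x ∈ V, Matrix.toEuclideanLin B x ∈ W) :
    ∑ i, ‖Matrix.toEuclideanLin B (stdOrthonormalBasis ℂ V i : EuclideanSpace ℂ (Fin n))‖ ^ 2
    ≤ ∑ j, ‖Matrix.toEuclideanLin Bᴴ
        (stdOrthonormalBasis ℂ W j : EuclideanSpace ℂ (Fin n))‖ ^ 2 := by
  set e := stdOrthonormalBasis ℂ V
  set f := stdOrthonormalBasis ℂ W
  have hon : Orthonormal ℂ (fun i => (e i : EuclideanSpace ℂ (Fin n))) :=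
    e.orthonormal.comp_linearIsometry V.subtypeₗᵢ
  have h1 : ∀ i, ‖Matrix.toEuclideanLin B (e i : EuclideanSpace ℂ (Fin n))‖ ^ 2
      = ∑ j, ‖inner ℂ (e i : EuclideanSpace ℂ (Fin n))
          (Matrix.toEuclideanLin Bᴴ (f j : EuclideanSpace ℂ (Fin n)))‖ ^ 2 := by
    intro i
    have := f.sum_sq_norm_inner_left ⟨_, hVW _ (e i).2⟩
    rw [Submodule.coe_norm] at this
    simp only at this
    rw [← this]
    refine Finset.sum_congr rfl fun j _ => ?_
    rw [Matrix.toEuclideanLin_conjTranspose_eq_adjoint, LinearMap.adjoint_inner_right]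
    rfl
  simp only [h1]
  rw [Finset.sum_comm]
  exact Finset.sum_le_sum fun j _ => hon.sum_inner_products_le _

lemma core_back {n : ℕ} (hn : 1 ≤ n) (B₁ B₂ : Matrix (Fin n) (Fin n) ℂ)
    (V W : Submodule ℂ (EuclideanSpace ℂ (Fin n)))
    (h1 : ∀ x ∈ V, Matrix.toEuclideanLin B₁ x ∈ W)
    (h2 : ∀ x ∈ V, Matrix.toEuclideanLin B₂ x ∈ W)
    (hdim : Module.finrank ℂ W < Module.finrank ℂ V)
    (h : defect B₁ B₂ ≤ (1 / (4 * (n : ℝ) ^ 4)) ^ 2) : False := by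
  have hn0 : (0 : ℝ) < n := by exact_mod_cast hn
  set ε : ℝ := 1 / (4 * (n : ℝ) ^ 4) with hεdef
  have hε : 0 < ε := by positivity
  unfold defect at h
  have hb := sq_nonneg (frobNorm (B₁ * B₁ᴴ + B₂ * B₂ᴴ - ((n : ℂ))⁻¹ • 1))
  have hb' := sq_nonneg (frobNorm (B₁ᴴ * B₁ + B₂ᴴ * B₂ - ((n : ℂ))⁻¹ • 1))
  have n1 := near B₁ B₂ ε hε (by linarith)
  have n2 := near B₁ᴴ B₂ᴴ ε hε (by simp only [conjTranspose_conjTranspose]; linarith)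
  have b1 := bessel B₁ V W h1
  have b2 := bessel B₂ V W h2
  set e := stdOrthonormalBasis ℂ V
  set f := stdOrthonormalBasis ℂ W
  have hlow : (Module.finrank ℂ V : ℝ) * ((n : ℝ)⁻¹ - n ^ 2 * ε) ≤
      ∑ i, (‖Matrix.toEuclideanLin B₁ (e i : EuclideanSpace ℂ (Fin n))‖ ^ 2
        + ‖Matrix.toEuclideanLin B₂ (e i : EuclideanSpace ℂ (Fin n))‖ ^ 2) := by
    have := Finset.card_nsmul_le_sum (Finset.univ : Finset (Fin (Module.finrank ℂ V)))
      (fun i => (‖Matrix.toEuclideanLin B₁ (e i : EuclideanSpace ℂ (Fin n))‖ ^ 2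
        + ‖Matrix.toEuclideanLin B₂ (e i : EuclideanSpace ℂ (Fin n))‖ ^ 2))
      ((n : ℝ)⁻¹ - n ^ 2 * ε) (fun i _ => by
        have := (abs_le.1 (n1 (e i) (by rw [← Submodule.coe_norm]; exact e.norm_eq_one i))).1
        linarith)
    simpa only [Finset.card_univ, Fintype.card_fin, nsmul_eq_mul] using this
  have hup : ∑ j, (‖Matrix.toEuclideanLin B₁ᴴ (f j : EuclideanSpace ℂ (Fin n))‖ ^ 2
        + ‖Matrix.toEuclideanLin B₂ᴴ (f j : EuclideanSpace ℂ (Fin n))‖ ^ 2)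
        ≤ (Module.finrank ℂ W : ℝ) * ((n : ℝ)⁻¹ + n ^ 2 * ε) := by
    have := Finset.sum_le_card_nsmul (Finset.univ : Finset (Fin (Module.finrank ℂ W)))
      (fun j => (‖Matrix.toEuclideanLin B₁ᴴ (f j : EuclideanSpace ℂ (Fin n))‖ ^ 2
        + ‖Matrix.toEuclideanLin B₂ᴴ (f j : EuclideanSpace ℂ (Fin n))‖ ^ 2))
      ((n : ℝ)⁻¹ + n ^ 2 * ε) (fun j _ => by
        have := (abs_le.1 (n2 (f j) (by rw [← Submodule.coe_norm]; exact f.norm_eq_one j))).2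
        linarith)
    simpa only [Finset.card_univ, Fintype.card_fin, nsmul_eq_mul] using this
  rw [Finset.sum_add_distrib] at hlow hup
  have hk : Module.finrank ℂ V ≤ n := by simpa using Submodule.finrank_le V
  have hkn : (Module.finrank ℂ V : ℝ) ≤ n := by exact_mod_cast hk
  have hrk : (Module.finrank ℂ W : ℝ) + 1 ≤ Module.finrank ℂ V := by exact_mod_cast hdim
  have hfin : (Module.finrank ℂ V : ℝ) * ((n : ℝ)⁻¹ - n ^ 2 * ε) ≤ (Module.finrank ℂ W : ℝ) * ((n : ℝ)⁻¹ + n ^ 2 * ε) := by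
    linarith
  have hε2 : (n : ℝ) ^ 2 * ε = (n : ℝ)⁻¹ / (4 * n) := by
    rw [hεdef]; field_simp
  rw [hε2] at hfin
  have hfin2 : (Module.finrank ℂ V : ℝ) * (1 - 1 / (4 * n)) ≤ Module.finrank ℂ W * (1 + 1 / (4 * n)) := by
    have := mul_le_mul_of_nonneg_right hfin hn0.le
    field_simp at this ⊢
    linarith
  field_simp at hfin2
  nlinarith

lemma bwd {n : ℕ} (hn : 1 ≤ n) (A₁ A₂ : Matrix (Fin n) (Fin n) ℂ)
    (hdet : ∀ s : ℂ, (s • A₁ + A₂).det = 0) (g h : GL (Fin n) ℂ)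
    (hd : defect ((g : Matrix (Fin n) (Fin n) ℂ) * A₁ * (h.1)ᴴ)
      ((g : Matrix (Fin n) (Fin n) ℂ) * A₂ * (h.1)ᴴ) ≤ (1 / (4 * (n : ℝ) ^ 4)) ^ 2) : False := by
  obtain ⟨k, v, W, hli, hW, hmap⟩ := shrunk A₁ A₂ hdet
  have hdg : IsUnit (h.1).det := (Matrix.isUnit_iff_isUnit_det _).1 h.isUnit
  have hhu : IsUnit ((h.1)ᴴ).det := by
    rw [det_conjTranspose]; exact hdg.star
  let L : (Fin n → ℂ) ≃ₗ[ℂ] EuclideanSpace ℂ (Fin n) := (WithLp.linearEquiv 2 ℂ (Fin n → ℂ)).symm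
  -- the transported vectors
  let Φ : (Fin n → ℂ) →ₗ[ℂ] EuclideanSpace ℂ (Fin n) := L.toLinearMap ∘ₗ (((h.1)ᴴ)⁻¹).mulVecLin
  have hinj : Function.Injective Φ := by
    refine L.injective.comp ?_
    exact Matrix.mulVec_injective_of_isUnit
      ((Matrix.isUnit_iff_isUnit_det _).2 (Matrix.isUnit_nonsing_inv_det _ hhu))
  let u : Fin k → EuclideanSpace ℂ (Fin n) := Φ ∘ v
  have hu : LinearIndependent ℂ u := hli.map' Φ (LinearMap.ker_eq_bot.2 hinj)
  let W' : Submodule ℂ (EuclideanSpace ℂ (Fin n)) :=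
    W.map (L.toLinearMap ∘ₗ (g.1).mulVecLin)
  have hkey : ∀ (A : Matrix (Fin n) (Fin n) ℂ), (∀ i, A *ᵥ v i ∈ W) →
      ∀ x ∈ Submodule.span ℂ (Set.range u), Matrix.toEuclideanLin (g.1 * A * (h.1)ᴴ) x ∈ W' := by
    intro A hA x hx
    have : Submodule.span ℂ (Set.range u) ≤
        W'.comap (Matrix.toEuclideanLin (g.1 * A * (h.1)ᴴ)) := by
      rw [Submodule.span_le]
      rintro _ ⟨i, rfl⟩
      refine ⟨A *ᵥ v i, hA i, ?_⟩
      simp only [u, Φ, L, Function.comp_apply, LinearMap.comp_apply, Matrix.mulVecLin_apply, LinearEquiv.coe_coe,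
        Matrix.toLpLin_apply, WithLp.coe_symm_linearEquiv, Matrix.mulVec_mulVec]
      rw [Matrix.mul_assoc (g.1 * A), Matrix.mul_nonsing_inv _ hhu, Matrix.mul_one]
    exact this hx
  refine core_back hn _ _ (Submodule.span ℂ (Set.range u)) W' (hkey A₁ fun i => (hmap i).1)
    (hkey A₂ fun i => (hmap i).2) ?_ hd
  rw [finrank_span_eq_card hu, Fintype.card_fin]
  exact (Submodule.finrank_map_le _ _).trans_lt hW

/-- Regularity of a matrix pencil is equivalent to operator scalability
(Corollary 4.23): for `n×m` complex matrices `A₁, A₂` with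
`ker A₁ ∩ ker A₂ = {0}` and `ker A₁ᴴ ∩ ker A₂ᴴ = {0}`, the pencil `sA₁ + A₂` is
regular — i.e. `n = m` and `det(sA₁ + A₂) ≠ 0` for some `s ∈ ℂ` (the determinant
taken after identifying `Fin n` with `Fin m` via the equality `n = m`) — if and
only if `n = m` and the pair `(A₁, A₂)` is `(1/n, 1/n)`-scalable: for every
`ε > 0` there are `g, h ∈ GL_n(ℂ)` with
`‖Σ_ℓ g A_ℓ hᴴ h A_ℓᴴ gᴴ − (1/n)·Iₙ‖² + ‖Σ_ℓ h A_ℓᴴ gᴴ g A_ℓ hᴴ − (1/n)·Iₙ‖² ≤ ε²`. -/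
theorem pencil_regular_iff_scalable {n m : ℕ} (hn : 1 ≤ n) (hm : 1 ≤ m)
    (A₁ A₂ : Matrix (Fin n) (Fin m) ℂ)
    (hker : LinearMap.ker A₁.mulVecLin ⊓ LinearMap.ker A₂.mulVecLin = ⊥)
    (hker' : LinearMap.ker (A₁ᴴ).mulVecLin ⊓ LinearMap.ker (A₂ᴴ).mulVecLin = ⊥) :
    (∃ hnm : n = m, ∃ s : ℂ,
        ((s • A₁ + A₂).submatrix id (Fin.cast hnm)).det ≠ 0) ↔
    (n = m ∧ ∀ ε : ℝ, 0 < ε → ∃ (g : GL (Fin n) ℂ) (h : GL (Fin m) ℂ),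
      (frobNorm (((g : Matrix (Fin n) (Fin n) ℂ) * A₁ * ((h : Matrix (Fin m) (Fin m) ℂ))ᴴ
            * (h : Matrix (Fin m) (Fin m) ℂ) * A₁ᴴ * ((g : Matrix (Fin n) (Fin n) ℂ))ᴴ
          + (g : Matrix (Fin n) (Fin n) ℂ) * A₂ * ((h : Matrix (Fin m) (Fin m) ℂ))ᴴ
            * (h : Matrix (Fin m) (Fin m) ℂ) * A₂ᴴ * ((g : Matrix (Fin n) (Fin n) ℂ))ᴴ)
          - ((n : ℂ))⁻¹ • (1 : Matrix (Fin n) (Fin n) ℂ))) ^ 2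
      + (frobNorm (((h : Matrix (Fin m) (Fin m) ℂ) * A₁ᴴ * ((g : Matrix (Fin n) (Fin n) ℂ))ᴴ
            * (g : Matrix (Fin n) (Fin n) ℂ) * A₁ * ((h : Matrix (Fin m) (Fin m) ℂ))ᴴ
          + (h : Matrix (Fin m) (Fin m) ℂ) * A₂ᴴ * ((g : Matrix (Fin n) (Fin n) ℂ))ᴴ
            * (g : Matrix (Fin n) (Fin n) ℂ) * A₂ * ((h : Matrix (Fin m) (Fin m) ℂ))ᴴ)
          - ((n : ℂ))⁻¹ • (1 : Matrix (Fin m) (Fin m) ℂ))) ^ 2 ≤ ε ^ 2) := by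
  constructor
  · rintro ⟨rfl, s, hs⟩
    refine ⟨rfl, fun ε hε => ?_⟩
    obtain ⟨g, h, hgh⟩ := fwd hn A₁ A₂ s (by simpa using hs) ε hε
    refine ⟨g, h, ?_⟩
    rw [defect_scaled]
    exact hgh
  · rintro ⟨rfl, hsc⟩
    refine ⟨rfl, ?_⟩
    by_contra! hcon
    obtain ⟨g, h, hgh⟩ := hsc (1 / (4 * (n : ℝ) ^ 4)) (by
      have : (0 : ℝ) < n := by exact_mod_cast hn
      positivity)
    rw [defect_scaled] at hgh
    exact bwd hn A₁ A₂ (fun s => by simpa using hcon s) g h hgh
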